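/- Let c > 0 and b ∈ ℝ. For η ∈ ℝ define λ_±(η) := iη(b ± γ_c(±η)), where γ_c(μ) is the principal square root of c + iμ. Then Re λ_±(0) = 0; Re λ_±(−η) = Re λ_±(η) for all η; Re λ_±(η) < 0 for every η ≠ 0; and η ↦ Re λ_±(η) is strictly decreasing on (0,∞) (equivalently, η·(d/dη)Re λ_±(η) < 0 for η ≠ 0). -/

import Mathlib

/-- principal square root of c + iμ -/
noncomputable def gam (c μ : ℝ) : ℂ := ((c : ℂ) + Complex.I * (μ : ℂ)) ^ ((1 : ℂ)/2)

/-- λ₊(η) = iη(b + γ_c(η)) -/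
noncomputable def lamP (c b η : ℝ) : ℂ := Complex.I * (η : ℂ) * ((b : ℂ) + gam c η)

/-- λ₋(η) = iη(b − γ_c(−η)) -/
noncomputable def lamM (c b η : ℝ) : ℂ := Complex.I * (η : ℂ) * ((b : ℂ) - gam c (-η))

/-!
Both eigenvalue curves have real part `-η Im γ_c(η)`: the term `iηb` is purely imaginary, and `λ₋`
is `λ₊` with `b` and `η` negated. Since the imaginary part of a principal square root carries the
sign of the imaginary part of its argument, this real part is minus the product of `|η|` and
`|Im γ_c(η)| = √((√(c² + η²) - c) / 2)`, both nonnegative and strictly increasing in `|η|`.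
-/

open Real Set

theorem im_mul_cpow_inv_two_im (z : ℂ) :
    z.im * (z ^ (2⁻¹ : ℂ)).im = |z.im| * √((‖z‖ - z.re) / 2) := by
  rcases le_or_gt 0 z.im with hz | hz
  · rw [Complex.cpow_inv_two_im_eq_sqrt hz, abs_of_nonneg hz]
  · rw [Complex.cpow_inv_two_im_eq_neg_sqrt hz, abs_of_neg hz, mul_neg, neg_mul]

/-- The exponential decay rate `-Re λ_±(η)` of the modes on the resonant curves. It is given by its
closed form, in which the independence of `b` and of the choice of curve is visible. -/
noncomputable def decayRate (c η : ℝ) : ℝ := |η| * √((√(c ^ 2 + η ^ 2) - c) / 2)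

theorem mul_gam_im (c μ : ℝ) : μ * (gam c μ).im = decayRate c μ := by
  have norm_eq : ‖(c : ℂ) + Complex.I * μ‖ = √(c ^ 2 + μ ^ 2) := by
    rw [mul_comm, Complex.norm_add_mul_I]
  simpa [gam, decayRate, norm_eq] using im_mul_cpow_inv_two_im (c + Complex.I * μ)

@[simp]
theorem decayRate_zero (c : ℝ) : decayRate c 0 = 0 := by simp [decayRate]

@[simp]
theorem decayRate_neg (c η : ℝ) : decayRate c (-η) = decayRate c η := by simp [decayRate]

@[simp]
theorem decayRate_abs (c η : ℝ) : decayRate c |η| = decayRate c η := by simp [decayRate]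

theorem strictMonoOn_sqrt_sqrt_sq_add_sq_sub (c : ℝ) :
    StrictMonoOn (fun η : ℝ => √((√(c ^ 2 + η ^ 2) - c) / 2)) (Ici 0) := by
  intro x hx y _ hxy
  have hc : c ≤ √(c ^ 2 + x ^ 2) := le_sqrt_of_sq_le (le_add_of_nonneg_right (sq_nonneg x))
  have hsq : x ^ 2 < y ^ 2 := pow_lt_pow_left₀ hxy hx two_ne_zero
  have hsqrt : √(c ^ 2 + x ^ 2) < √(c ^ 2 + y ^ 2) := sqrt_lt_sqrt (by positivity) (by gcongr)
  exact sqrt_lt_sqrt (by linarith) (by gcongr)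

theorem strictMonoOn_decayRate (c : ℝ) : StrictMonoOn (decayRate c) (Ici 0) := by
  intro x hx y hy hxy
  simp only [decayRate, abs_of_nonneg (mem_Ici.1 hx), abs_of_nonneg (mem_Ici.1 hy)]
  exact mul_lt_mul'' hxy (strictMonoOn_sqrt_sqrt_sq_add_sq_sub c hx hy hxy) hx (sqrt_nonneg _)

theorem decayRate_pos (c : ℝ) {η : ℝ} (hη : η ≠ 0) : 0 < decayRate c η := by
  simpa using strictMonoOn_decayRate c self_mem_Ici (abs_nonneg η) (abs_pos.2 hη)

theorem lamP_re (c b η : ℝ) : (lamP c b η).re = -decayRate c η := by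
  simp [lamP, ← mul_gam_im]

theorem lamM_eq_lamP_neg_neg (c b η : ℝ) : lamM c b η = lamP c (-b) (-η) := by
  simp only [lamM, lamP, Complex.ofReal_neg]
  ring

theorem lamM_re (c b η : ℝ) : (lamM c b η).re = -decayRate c η := by
  rw [lamM_eq_lamP_neg_neg, lamP_re, decayRate_neg]

theorem resonant_eigenvalue_curves_general (c b : ℝ) :
    ((lamP c b 0).re = 0 ∧ (lamM c b 0).re = 0)
    ∧ (∀ η : ℝ, (lamP c b (-η)).re = (lamP c b η).re
        ∧ (lamM c b (-η)).re = (lamM c b η).re)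
    ∧ (∀ η : ℝ, η ≠ 0 → (lamP c b η).re < 0 ∧ (lamM c b η).re < 0)
    ∧ (StrictAntiOn (fun η : ℝ => (lamP c b η).re) (Set.Ioi 0)
        ∧ StrictAntiOn (fun η : ℝ => (lamM c b η).re) (Set.Ioi 0)) := by
  have hanti : StrictAntiOn (fun η => -decayRate c η) (Ioi 0) :=
    ((strictMonoOn_decayRate c).mono Ioi_subset_Ici_self).neg
  have hneg (η : ℝ) (hη : η ≠ 0) : -decayRate c η < 0 := neg_neg_of_pos (decayRate_pos c hη)
  simp only [lamP_re, lamM_re, decayRate_zero, decayRate_neg, neg_zero, and_self, implies_true,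
    true_and]
  exact ⟨hneg, hanti⟩

/-- properties of the curves of resonant continuous eigenvalues. -/
theorem resonant_eigenvalue_curves (c b : ℝ) (hc : 0 < c) :
    ((lamP c b 0).re = 0 ∧ (lamM c b 0).re = 0)
    ∧ (∀ η : ℝ, (lamP c b (-η)).re = (lamP c b η).re
        ∧ (lamM c b (-η)).re = (lamM c b η).re)
    ∧ (∀ η : ℝ, η ≠ 0 → (lamP c b η).re < 0 ∧ (lamM c b η).re < 0)
    ∧ (StrictAntiOn (fun η : ℝ => (lamP c b η).re) (Set.Ioi 0)
        ∧ StrictAntiOn (fun η : ℝ => (lamM c b η).re) (Set.Ioi 0)) :=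
  resonant_eigenvalue_curves_general c b
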